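/- Let Q be a well-formed formula, let M be a Q-consistent extension of the implicational propositional calculus, and let A be a wf. If QQA is not a theorem of M, then the extension N of M obtained by adding QA as an extra axiom is Q-consistent. -/

import Mathlib

/-- Well-formed formulas of the implicational propositional calculus:
propositional variables (indexed by ℕ, so the set of wfs is countable)
and the single connective ⊃. -/
inductive Wf where
  | var : ℕ → Wf
  | imp : Wf → Wf → Wf
deriving DecidableEq

infixr:60 " ⊃' " => Wf.imp

/-- `Deduces Γ A` : `A` is deducible from the set `Γ` of extra axioms/hypotheses,
using the three axiom schemes of IPC (including the Peirce scheme) and modus ponens.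
Theorems of IPC are `Deduces ∅ A`; for an extension `M` of IPC with extra-axiom
set `E`, `T(M)` is `Deduces E`, and deducibility from hypotheses `Γ` in `M` is
`Deduces (E ∪ Γ)`. -/
inductive Deduces : Set Wf → Wf → Prop where
  | hyp : ∀ {Γ : Set Wf} {A : Wf}, A ∈ Γ → Deduces Γ A
  | ax1 : ∀ {Γ : Set Wf} (A B : Wf), Deduces Γ (A ⊃' (B ⊃' A))
  | ax2 : ∀ {Γ : Set Wf} (A B C : Wf),
      Deduces Γ ((A ⊃' (B ⊃' C)) ⊃' ((A ⊃' B) ⊃' (A ⊃' C)))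
  | peirce : ∀ {Γ : Set Wf} (A B : Wf), Deduces Γ (((A ⊃' B) ⊃' A) ⊃' A)
  | mp : ∀ {Γ : Set Wf} {A B : Wf}, Deduces Γ (A ⊃' B) → Deduces Γ A → Deduces Γ B

theorem deduction_aux {Γ Δ : Set Wf} {P B : Wf} (hd : Deduces Δ B) (hΔ : Δ = insert P Γ) :
    Deduces Γ (P ⊃' B) := by
  induction hd with
  | @hyp B hm =>
    subst hΔ
    rcases hm with rfl | hm
    · exact .mp (.mp (.ax2 B (B ⊃' B) B) (.ax1 B (B ⊃' B))) (.ax1 B B)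
    · exact .mp (.ax1 B P) (.hyp hm)
  | ax1 X Y => exact .mp (.ax1 _ _) (.ax1 X Y)
  | ax2 X Y Z => exact .mp (.ax1 _ _) (.ax2 X Y Z)
  | peirce X Y => exact .mp (.ax1 _ _) (.peirce X Y)
  | mp _ _ ih1 ih2 => exact .mp (.mp (.ax2 _ _ _) ih1) ih2

/-- Theorem 3: if M (extra axioms E) is a Q-consistent extension of IPC and
QQA is not a theorem of M, then the extension N of M obtained by adding QA
as an extra axiom is Q-consistent. -/
theorem stmt_11 (Q A : Wf) (E : Set Wf)
    (hcons : ¬ Deduces E Q)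
    (h : ¬ Deduces E (((A ⊃' Q) ⊃' Q))) :
    ¬ Deduces (insert (A ⊃' Q) E) Q := by
  exact fun hd => h (deduction_aux hd rfl)
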